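/- A labeled planar binary tree avoids the three patterns x(*, x(*,*)), x(*, y(*,*)), and y(*, y(*,*)) if and only if it belongs to the least class N of trees satisfying: leaf ∈ N, and for all u, v ∈ N the trees x(u, leaf), y(u, leaf), and y(u, x(v, leaf)) belong to N. Equivalently, every nontrivial normal monomial of the operad noncom-Zin has exactly one of the three forms x(u, leaf), y(u, leaf), y(u, x(v, leaf)) with u, v normal. -/

import Mathlib

/-- Planar binary trees with internal vertices labeled by one of two symbols `x`, `y`. -/
inductive LTree : Type
  | leaf : LTree
  | x : LTree → LTree → LTree
  | y : LTree → LTree → LTree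

namespace LTree

/-- The subtree relation. -/
inductive Subtree : LTree → LTree → Prop
  | refl (t : LTree) : Subtree t t
  | xl {s u v : LTree} : Subtree s u → Subtree s (x u v)
  | xr {s u v : LTree} : Subtree s v → Subtree s (x u v)
  | yl {s u v : LTree} : Subtree s u → Subtree s (y u v)
  | yr {s u v : LTree} : Subtree s v → Subtree s (y u v)

/-- A tree matches (at the root) one of the three forbidden patterns
`x(*, x(*,*))`, `x(*, y(*,*))`, `y(*, y(*,*))`. -/
def IsBadZin : LTree → Prop
  | x _ (x _ _) => True
  | x _ (y _ _) => True
  | y _ (y _ _) => True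
  | _ => False

/-- A tree avoids the three patterns iff no subtree matches one of them. -/
def AvoidsZin (t : LTree) : Prop := ∀ s : LTree, Subtree s t → ¬ IsBadZin s

/-- The least class `N` of trees containing `leaf` and closed under the three
normal-form constructions of the operad noncom-Zin. -/
inductive NormalZin : LTree → Prop
  | leaf : NormalZin leaf
  | xleaf {u : LTree} : NormalZin u → NormalZin (x u leaf)
  | yleaf {u : LTree} : NormalZin u → NormalZin (y u leaf)
  | yx {u v : LTree} : NormalZin u → NormalZin v → NormalZin (y u (x v leaf))

end LTree

/-! Avoidance and normality satisfy the same recursion: each holds at an internal vertex exactly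
when no forbidden pattern is rooted there and it holds for both branches. They agree on `leaf`,
hence everywhere. For normality the point is that `x a b` is normal only if `b = leaf`, so a normal
right branch of a `y`-vertex, when not itself rooted at `y`, is `leaf` or `x a leaf`. -/

namespace LTree

variable {s t u v : LTree}

theorem subtree_leaf_iff : Subtree s leaf ↔ s = leaf := by
  constructor
  · rintro ⟨⟩
    rfl
  · rintro rfl
    exact .refl _

theorem subtree_x_iff : Subtree s (x u v) ↔ s = x u v ∨ Subtree s u ∨ Subtree s v := by
  constructor
  · intro h
    cases h with
    | refl => exact .inl rfl
    | xl hu => exact .inr (.inl hu)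
    | xr hv => exact .inr (.inr hv)
  · rintro (rfl | hu | hv)
    exacts [.refl _, .xl hu, .xr hv]

theorem subtree_y_iff : Subtree s (y u v) ↔ s = y u v ∨ Subtree s u ∨ Subtree s v := by
  constructor
  · intro h
    cases h with
    | refl => exact .inl rfl
    | yl hu => exact .inr (.inl hu)
    | yr hv => exact .inr (.inr hv)
  · rintro (rfl | hu | hv)
    exacts [.refl _, .yl hu, .yr hv]

theorem isBadZin_x_iff : IsBadZin (x u v) ↔ v ≠ leaf := by
  cases v <;> simp [IsBadZin]

theorem isBadZin_y_iff : IsBadZin (y u v) ↔ ∃ a b, v = y a b := by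
  cases v <;> simp [IsBadZin]

theorem avoidsZin_leaf : AvoidsZin leaf := by
  simp [AvoidsZin, subtree_leaf_iff, IsBadZin]

theorem avoidsZin_x_iff : AvoidsZin (x u v) ↔ ¬IsBadZin (x u v) ∧ AvoidsZin u ∧ AvoidsZin v := by
  simp only [AvoidsZin, subtree_x_iff, or_imp, forall_and, forall_eq]

theorem avoidsZin_y_iff : AvoidsZin (y u v) ↔ ¬IsBadZin (y u v) ∧ AvoidsZin u ∧ AvoidsZin v := by
  simp only [AvoidsZin, subtree_y_iff, or_imp, forall_and, forall_eq]

theorem normalZin_x_iff : NormalZin (x u v) ↔ ¬IsBadZin (x u v) ∧ NormalZin u ∧ NormalZin v := by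
  rw [isBadZin_x_iff, not_not]
  constructor
  · intro h
    cases h with
    | xleaf hu => exact ⟨rfl, hu, .leaf⟩
  · rintro ⟨rfl, hu, -⟩
    exact .xleaf hu

theorem normalZin_y_iff : NormalZin (y u v) ↔ ¬IsBadZin (y u v) ∧ NormalZin u ∧ NormalZin v := by
  rw [isBadZin_y_iff]
  constructor
  · intro h
    cases h with
    | yleaf hu => exact ⟨by simp, hu, .leaf⟩
    | yx hu ha => exact ⟨by simp, hu, .xleaf ha⟩
  · rintro ⟨not_y, hu, hv⟩
    cases hv with
    | leaf => exact .yleaf hu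
    | xleaf ha => exact .yx hu ha
    | yleaf | yx => exact absurd ⟨_, _, rfl⟩ not_y

theorem avoidsZin_iff_normalZin : AvoidsZin t ↔ NormalZin t := by
  induction t with
  | leaf => exact iff_of_true avoidsZin_leaf .leaf
  | x u v ihu ihv => rw [avoidsZin_x_iff, normalZin_x_iff, ihu, ihv]
  | y u v ihu ihv => rw [avoidsZin_y_iff, normalZin_y_iff, ihu, ihv]

theorem normalZin_iff_eq_leaf_or_exists :
    NormalZin t ↔ t = leaf ∨
      (∃ u, NormalZin u ∧ t = x u leaf) ∨
      (∃ u, NormalZin u ∧ t = y u leaf) ∨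
      (∃ u v, NormalZin u ∧ NormalZin v ∧ t = y u (x v leaf)) := by
  constructor
  · rintro (_ | hu | hu | ⟨hu, hv⟩)
    · exact .inl rfl
    · exact .inr (.inl ⟨_, hu, rfl⟩)
    · exact .inr (.inr (.inl ⟨_, hu, rfl⟩))
    · exact .inr (.inr (.inr ⟨_, _, hu, hv, rfl⟩))
  · rintro (rfl | ⟨u, hu, rfl⟩ | ⟨u, hu, rfl⟩ | ⟨u, v, hu, hv, rfl⟩)
    exacts [.leaf, .xleaf hu, .yleaf hu, .yx hu hv]

end LTree

open LTree in
/-- A labeled planar binary tree avoids the three patterns `x(*, x(*,*))`,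
`x(*, y(*,*))`, `y(*, y(*,*))` iff it belongs to the least class `N`;
equivalently, every nontrivial normal monomial of noncom-Zin has exactly one of
the three forms `x(u, leaf)`, `y(u, leaf)`, `y(u, x(v, leaf))` with `u`, `v` normal. -/
theorem noncomZin_normal_forms :
    (∀ t : LTree, AvoidsZin t ↔ NormalZin t) ∧
    (∀ t : LTree, NormalZin t → t ≠ LTree.leaf →
      (∃ u, NormalZin u ∧ t = LTree.x u LTree.leaf) ∨
      (∃ u, NormalZin u ∧ t = LTree.y u LTree.leaf) ∨
      (∃ u v, NormalZin u ∧ NormalZin v ∧ t = LTree.y u (LTree.x v LTree.leaf))) :=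
  ⟨fun _ => avoidsZin_iff_normalZin,
    fun _ ht hne => (normalZin_iff_eq_leaf_or_exists.mp ht).resolve_left hne⟩
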